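/- Let λ be an antidominant composition with exactly s ≥ 1 nonzero parts (λ_1 = ⋯ = λ_{n−s} = 0 < λ_{n−s+1}), let ν = (0,…,0,λ_{n−s+1}+1,…,λ_n+1), and let 0 ≤ r ≤ min(s, n−1). Then, as an identity in ℤ[q][x_1,…,x_n]: Σ_{σ} q^{qstat(σ)} x^{k(σ)} = Σ_{k ∈ ℤ_{≥0}^n} c^{ν}_{(n−s+r+1,…,n,1,…,r)}(k_1+1,…,k_r+1, k_{r+1},…,k_{n−s+r}, k_{n−s+r+1}+1,…,k_n+1) · x_1^{k_1+1}⋯x_r^{k_r+1}·x_{r+1}^{k_{r+1}}⋯x_n^{k_n}, where the left-hand sum is over all appropriate fillings σ of dg'(π^r(λ)), and the subscript (n−s+r+1,…,n,1,…,r) lists n−s+r+1,…,n followed by 1,…,r. -/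

import Mathlib

open Finset

namespace CO

/-- The column diagram `dg'(λ)` of a composition, as a finset of boxes `(i, j)`,
`1 ≤ i ≤ n`, `1 ≤ j ≤ λ_i`. -/
def dgF (n : ℕ) (lam : ℕ → ℕ) : Finset (ℕ × ℕ) :=
  (Finset.Icc 1 n).biUnion fun i => (Finset.Icc 1 (lam i)).image fun j => (i, j)

/-- The augmented diagram `d̂g(λ)`: one extra box `(i, 0)` below each column. -/
def augF (n : ℕ) (lam : ℕ → ℕ) : Finset (ℕ × ℕ) :=
  dgF n lam ∪ (Finset.Icc 1 n).image fun i => (i, 0)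

/-- The box `d(u)` directly below a box. -/
def dbox (u : ℕ × ℕ) : ℕ × ℕ := (u.1, u.2 - 1)

/-- The augmented filling `σ̂`: equal to `σ` on positive rows and to `i` on `(i, 0)`. -/
def aug (σ : ℕ × ℕ → ℕ) (u : ℕ × ℕ) : ℕ := if u.2 = 0 then u.1 else σ u

/-- A filling takes values in `{1, …, n}` on the diagram. -/
def IsFilling (n : ℕ) (lam : ℕ → ℕ) (σ : ℕ × ℕ → ℕ) : Prop :=
  ∀ u ∈ dgF n lam, 1 ≤ σ u ∧ σ u ≤ n

/-- Attacking boxes: same row, or consecutive rows with the lower box to the right. -/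
def Attack (u v : ℕ × ℕ) : Prop :=
  u ≠ v ∧ (u.2 = v.2 ∨ (u.2 = v.2 + 1 ∧ u.1 < v.1) ∨ (v.2 = u.2 + 1 ∧ v.1 < u.1))

/-- A non-attacking filling: `σ̂` takes distinct values on attacking pairs of the
augmented diagram. -/
def NonAttacking (n : ℕ) (lam : ℕ → ℕ) (σ : ℕ × ℕ → ℕ) : Prop :=
  ∀ u ∈ augF n lam, ∀ v ∈ augF n lam, Attack u v → aug σ u ≠ aug σ v

/-- The arm of a box `u`. -/
def armF (n : ℕ) (lam : ℕ → ℕ) (u : ℕ × ℕ) : Finset (ℕ × ℕ) :=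
  ((dgF n lam).filter fun v => v.1 < u.1 ∧ v.2 = u.2 ∧ lam v.1 ≤ lam u.1) ∪
    ((augF n lam).filter fun v => u.1 < v.1 ∧ v.2 + 1 = u.2 ∧ lam v.1 < lam u.1)

/-- `a(u) = |arm(u)|`. -/
def armCard (n : ℕ) (lam : ℕ → ℕ) (u : ℕ × ℕ) : ℕ := (armF n lam u).card

/-- The number of inversions of `σ̂`: attacking pairs `u, u'` with `σ̂(u) < σ̂(u')`
and (same row with `u` to the left, or `u'` one row above `u` strictly to the left). -/
def invCard (n : ℕ) (lam : ℕ → ℕ) (σ : ℕ × ℕ → ℕ) : ℕ :=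
  ((augF n lam ×ˢ augF n lam).filter fun p =>
    aug σ p.1 < aug σ p.2 ∧
      ((p.1.2 = p.2.2 ∧ p.1.1 < p.2.1) ∨ (p.2.2 = p.1.2 + 1 ∧ p.2.1 < p.1.1))).card

/-- The descent set of `σ̂`. -/
def desF (n : ℕ) (lam : ℕ → ℕ) (σ : ℕ × ℕ → ℕ) : Finset (ℕ × ℕ) :=
  (dgF n lam).filter fun u => aug σ (dbox u) < aug σ u

/-- The statistic `coinv(σ̂)` (as an integer). -/
def coinv (n : ℕ) (lam : ℕ → ℕ) (σ : ℕ × ℕ → ℕ) : ℤ :=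
  (∑ u ∈ dgF n lam, (armCard n lam u : ℤ)) - invCard n lam σ +
    (((Finset.Icc 1 n ×ˢ Finset.Icc 1 n).filter fun p =>
      p.1 < p.2 ∧ lam p.1 ≤ lam p.2).card : ℤ) +
    ∑ u ∈ desF n lam σ, (armCard n lam u : ℤ)

/-- The statistic `T(σ)`. -/
def Tstat (n : ℕ) (lam : ℕ → ℕ) (σ : ℕ × ℕ → ℕ) : ℤ :=
  coinv n lam σ -
    ∑ u ∈ (dgF n lam).filter fun u => aug σ u ≠ aug σ (dbox u), (armCard n lam u : ℤ)

/-- Antidominant composition: `λ_1 ≤ ⋯ ≤ λ_n`. -/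
def Antidominant (n : ℕ) (lam : ℕ → ℕ) : Prop :=
  ∀ i j, 1 ≤ i → i ≤ j → j ≤ n → lam i ≤ lam j

/-- Appropriate filling: non-attacking with `T(σ) = 0`. -/
def Appropriate (n : ℕ) (lam : ℕ → ℕ) (σ : ℕ × ℕ → ℕ) : Prop :=
  IsFilling n lam σ ∧ NonAttacking n lam σ ∧ Tstat n lam σ = 0

/-- The operation `π` on compositions: `π(λ) = (λ_n + 1, λ_1, …, λ_{n-1})`. -/
def piComp (n : ℕ) (lam : ℕ → ℕ) : ℕ → ℕ :=
  fun i => if i = 1 then lam n + 1 else lam (i - 1)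

/-- The operation `π` on boxes. -/
def piBox (n : ℕ) (u : ℕ × ℕ) : ℕ × ℕ :=
  if u.1 < n then (u.1 + 1, u.2) else (1, u.2 + 1)

/-- Extension by zero of a function defined on the diagram. -/
def ext (n : ℕ) (lam : ℕ → ℕ) (f : {u // u ∈ dgF n lam} → ℕ) : ℕ × ℕ → ℕ :=
  fun u => if h : u ∈ dgF n lam then f ⟨u, h⟩ else 0

/-- `qstat(σ) = Σ (l(u) + 1)` over boxes `u` with `σ̂(u) < σ̂(d(u))`. -/
def qstat (n : ℕ) (lam : ℕ → ℕ) (σ : ℕ × ℕ → ℕ) : ℕ :=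
  ∑ u ∈ (dgF n lam).filter fun u => aug σ u < aug σ (dbox u), (lam u.1 - u.2 + 1)

end CO

namespace CO

/-- The statistic `asc(τ) = Σ (l(u) + 1)` over boxes `u = (i, j)` with `j ≥ 2` and
`τ(u) < τ(d(u))`. -/
def ascStat (n : ℕ) (mu : ℕ → ℕ) (τ : ℕ × ℕ → ℕ) : ℕ :=
  ∑ u ∈ (dgF n mu).filter fun u => 2 ≤ u.2 ∧ τ u < τ (dbox u), (mu u.1 - u.2 + 1)

/-- The greedy rule (iii): for boxes in rows `≥ 2`, with `S = τ(arm(u)) ∪ {τ(u)}`,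
`τ(u)` is the minimum of `{x ∈ S : x ≥ τ(d(u))}` if nonempty, and `min S` otherwise. -/
def GreedyRule (n : ℕ) (mu : ℕ → ℕ) (τ : ℕ × ℕ → ℕ) : Prop :=
  ∀ u ∈ dgF n mu, 2 ≤ u.2 →
    (({x ∈ τ '' ↑(armF n mu u) ∪ {τ u} | τ (dbox u) ≤ x}.Nonempty →
        τ u = sInf {x ∈ τ '' ↑(armF n mu u) ∪ {τ u} | τ (dbox u) ≤ x}) ∧
      (¬ {x ∈ τ '' ↑(armF n mu u) ∪ {τ u} | τ (dbox u) ≤ x}.Nonempty →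
        τ u = sInf (τ '' ↑(armF n mu u) ∪ {τ u})))

/-- Conditions (i)–(iv) on the fillings `τ` counted by `c_a^μ(k)`. -/
def CCond (n : ℕ) (mu : ℕ → ℕ) (a : ℕ → ℕ) (k : ℕ → ℕ) (τ : ℕ × ℕ → ℕ) : Prop :=
  (∀ u ∈ dgF n mu, 1 ≤ τ u ∧ τ u ≤ n) ∧
    (∀ j, (j, 1) ∈ dgF n mu → τ (j, 1) = a j) ∧
    (∀ u ∈ dgF n mu, ∀ v ∈ dgF n mu, Attack u v → τ u ≠ τ v) ∧
    GreedyRule n mu τ ∧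
    ∀ i, 1 ≤ i → i ≤ n → ((dgF n mu).filter fun u => τ u = i).card = k i

open Classical in
/-- The coefficient `c_a^μ(k) ∈ ℤ[q]`: the generating function `Σ_τ q^{asc(τ)}`
over fillings satisfying (i)–(iv). -/
noncomputable def cCoef (n : ℕ) (mu : ℕ → ℕ) (a : ℕ → ℕ) (k : ℕ → ℕ) : Polynomial ℤ :=
  ∑ f ∈ (Fintype.piFinset fun _ : {u // u ∈ dgF n mu} => Finset.Icc 1 n).filter
      fun f => CCond n mu a k (ext n mu f),
    Polynomial.X ^ ascStat n mu (ext n mu f)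

end CO

namespace CO

/-- Transport a `Fin n`-tuple to a function on `{1, …, n}` (1-based indexing). -/
def liftFin (n : ℕ) (k : Fin n → ℕ) : ℕ → ℕ :=
  fun i => if h : i - 1 < n then k ⟨i - 1, h⟩ else 0

/-- The statistic `stat(w)` on words with letters in `{1, …, n}`: the number of pairs
of positions `i < j` with either `w_i < w_j < n`, or `w_i = n` and `w_j < n`. -/
def wstat (n m : ℕ) (w : Fin m → ℕ) : ℕ :=
  ((Finset.univ ×ˢ Finset.univ : Finset (Fin m × Fin m)).filter fun p =>
    p.1 < p.2 ∧ ((w p.1 < w p.2 ∧ w p.2 < n) ∨ (w p.1 = n ∧ w p.2 < n))).card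

open Classical in
/-- The `q`-multinomial coefficient `binom_q(m; l)`, as the generating function of
`stat` over words of length `m` with letters in `{1, …, n}` and content `l`. -/
noncomputable def qMultinomial (n m : ℕ) (l : ℕ → ℕ) : Polynomial ℤ :=
  ∑ w ∈ (Fintype.piFinset fun _ : Fin m => Finset.Icc 1 n).filter
      fun w => ∀ t ∈ Finset.Icc 1 n, (Finset.univ.filter fun i => w i = t).card = l t,
    Polynomial.X ^ wstat n m w

end CO


namespace CO

theorem mem_dgF {n : ℕ} {lam : ℕ → ℕ} {u : ℕ × ℕ} :
    u ∈ dgF n lam ↔ 1 ≤ u.1 ∧ u.1 ≤ n ∧ 1 ≤ u.2 ∧ u.2 ≤ lam u.1 := by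
  obtain ⟨a, b⟩ := u
  simp only [dgF, mem_biUnion, mem_Icc, mem_image, Prod.mk.injEq]
  constructor
  · rintro ⟨i, hi, j, hj, rfl, rfl⟩
    omega
  · rintro ⟨h1, h2, h3, h4⟩
    exact ⟨a, ⟨h1, h2⟩, b, ⟨h3, h4⟩, rfl, rfl⟩

theorem mem_augF {n : ℕ} {lam : ℕ → ℕ} {u : ℕ × ℕ} :
    u ∈ augF n lam ↔ 1 ≤ u.1 ∧ u.1 ≤ n ∧ u.2 ≤ lam u.1 := by
  obtain ⟨a, b⟩ := u
  simp only [augF, mem_union, mem_dgF, mem_image, mem_Icc, Prod.mk.injEq]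
  constructor
  · rintro (h | ⟨i, hi, rfl, rfl⟩)
    · omega
    · omega
  · rintro ⟨h1, h2, h3⟩
    rcases Nat.eq_zero_or_pos b with h | h
    · exact Or.inr ⟨a, ⟨h1, h2⟩, rfl, h.symm⟩
    · exact Or.inl ⟨h1, h2, h, h3⟩

theorem mem_armF {n : ℕ} {lam : ℕ → ℕ} {u v : ℕ × ℕ} :
    v ∈ armF n lam u ↔ 1 ≤ v.1 ∧ v.1 ≤ n ∧ v.2 ≤ lam v.1 ∧
      ((1 ≤ v.2 ∧ v.1 < u.1 ∧ v.2 = u.2 ∧ lam v.1 ≤ lam u.1) ∨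
       (u.1 < v.1 ∧ v.2 + 1 = u.2 ∧ lam v.1 < lam u.1)) := by
  simp only [armF, mem_union, mem_filter, mem_dgF, mem_augF]
  tauto

/-- Pairs `(u, v)` with `v` in the arm of `u`. -/
def prs (n : ℕ) (lam : ℕ → ℕ) : Finset ((ℕ × ℕ) × (ℕ × ℕ)) :=
  (dgF n lam ×ˢ augF n lam).filter fun p => p.2 ∈ armF n lam p.1

theorem armF_subset {n : ℕ} {lam : ℕ → ℕ} (u : ℕ × ℕ) : armF n lam u ⊆ augF n lam := by
  intro v hv
  rw [mem_armF] at hv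
  rw [mem_augF]
  tauto

theorem sum_prs {n : ℕ} {lam : ℕ → ℕ} (g : (ℕ × ℕ) → (ℕ × ℕ) → ℤ) :
    ∑ p ∈ prs n lam, g p.1 p.2 = ∑ u ∈ dgF n lam, ∑ v ∈ armF n lam u, g u v := by
  rw [prs, sum_filter, sum_product]
  refine sum_congr rfl fun u _ => ?_
  rw [← sum_filter]
  refine sum_congr ?_ fun _ _ => rfl
  ext v
  rw [mem_filter]
  exact ⟨fun h => h.2, fun h => ⟨armF_subset u h, h⟩⟩

theorem mem_prs {n : ℕ} {lam : ℕ → ℕ} {p : (ℕ × ℕ) × (ℕ × ℕ)} :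
    p ∈ prs n lam ↔ p.1 ∈ dgF n lam ∧ p.2 ∈ armF n lam p.1 := by
  rw [prs, mem_filter, mem_product]
  exact ⟨fun h => ⟨h.1.1, h.2⟩, fun h => ⟨⟨h.1, armF_subset _ h.2⟩, h.2⟩⟩

theorem invCard_eq (n : ℕ) (lam : ℕ → ℕ) (σ : ℕ × ℕ → ℕ) :
    invCard n lam σ =
      ((Finset.Icc 1 n ×ˢ Finset.Icc 1 n).filter fun p =>
        p.1 < p.2 ∧ lam p.1 ≤ lam p.2).card +
      (((prs n lam).filter fun p => aug σ p.2 < aug σ p.1).card +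
       ((prs n lam).filter fun p => aug σ (dbox p.1) < aug σ p.2).card) := by
  set A := (Finset.Icc 1 n ×ˢ Finset.Icc 1 n).filter fun p =>
        p.1 < p.2 ∧ lam p.1 ≤ lam p.2 with hA
  set B := (prs n lam).filter fun p => aug σ p.2 < aug σ p.1 with hB
  set C := (prs n lam).filter fun p => aug σ (dbox p.1) < aug σ p.2 with hC
  have eA : A.card = (A.image fun p => (((p.1, 0), (p.2, 0)) : (ℕ × ℕ) × (ℕ × ℕ))).card := by
    rw [card_image_of_injOn]
    rintro ⟨a, b⟩ _ ⟨c, d⟩ _ h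
    simpa using h
  have eB : B.card = (B.image fun p => (p.2, p.1)).card := by
    rw [card_image_of_injOn]
    rintro ⟨a, b⟩ _ ⟨c, d⟩ _ h
    simp only [Prod.mk.injEq] at h ⊢
    exact ⟨h.2, h.1⟩
  have eC : C.card = (C.image fun p => (dbox p.1, p.2)).card := by
    rw [card_image_of_injOn]
    rintro ⟨⟨a, a'⟩, b⟩ h1 ⟨⟨c, c'⟩, d⟩ h2 h
    simp only [hC, coe_filter, Set.mem_ofPred_eq, mem_prs, mem_dgF] at h1 h2
    simp only [Prod.mk.injEq, dbox] at h ⊢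
    refine ⟨⟨h.1.1, ?_⟩, h.2⟩
    omega
  have mA : ∀ a b c d, ((a, b), (c, d)) ∈ (A.image fun p => (((p.1, 0), (p.2, 0)) : (ℕ × ℕ) × (ℕ × ℕ))) ↔
      1 ≤ a ∧ a ≤ n ∧ 1 ≤ c ∧ c ≤ n ∧ a < c ∧ lam a ≤ lam c ∧ b = 0 ∧ d = 0 := by
    intro a b c d
    simp only [hA, mem_image, mem_filter, mem_product, mem_Icc, Prod.mk.injEq, Prod.exists]
    constructor
    · rintro ⟨x, y, h, ⟨rfl, rfl⟩, rfl, rfl⟩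
      tauto
    · rintro ⟨h1, h2, h3, h4, h5, h6, rfl, rfl⟩
      exact ⟨a, c, by tauto, by tauto⟩
  have mB : ∀ p q, (p, q) ∈ (B.image fun p => (p.2, p.1)) ↔
      q ∈ dgF n lam ∧ p ∈ armF n lam q ∧ aug σ p < aug σ q := by
    intro p q
    simp only [hB, mem_image, mem_filter, mem_prs, Prod.mk.injEq]
    constructor
    · rintro ⟨⟨x, y⟩, h, rfl, rfl⟩
      exact ⟨h.1.1, h.1.2, h.2⟩
    · rintro ⟨h1, h2, h3⟩
      exact ⟨(q, p), ⟨⟨h1, h2⟩, h3⟩, rfl, rfl⟩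
  have mC : ∀ p q, (p, q) ∈ (C.image fun p => (dbox p.1, p.2)) ↔
      (p.1, p.2 + 1) ∈ dgF n lam ∧ q ∈ armF n lam (p.1, p.2 + 1) ∧ aug σ p < aug σ q := by
    intro p q
    simp only [hC, mem_image, mem_filter, mem_prs, Prod.mk.injEq]
    constructor
    · rintro ⟨⟨⟨x, y⟩, q'⟩, ⟨⟨h1, h2⟩, h3⟩, rfl, rfl⟩
      have : y - 1 + 1 = y := by
        rw [mem_dgF] at h1
        simp only at h1
        omega
      simp only [dbox, this] at *
      exact ⟨h1, h2, h3⟩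
    · rintro ⟨h1, h2, h3⟩
      exact ⟨((p.1, p.2 + 1), q), ⟨⟨h1, h2⟩, h3⟩, rfl, rfl⟩
  rw [eA, eB, eC, ← card_union_of_disjoint, ← card_union_of_disjoint, invCard]
  · congr 1
    ext ⟨⟨a, b⟩, ⟨c, d⟩⟩
    rw [mem_union, mem_union, mA, mB, mC]
    simp only [mem_filter, mem_product, mem_augF, mem_dgF, mem_armF]
    have hz : b = 0 → d = 0 → aug σ (a, b) = a ∧ aug σ (c, d) = c := by
      rintro rfl rfl
      simp [aug]
    generalize aug σ (a, b) = x at *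
    generalize aug σ (c, d) = y at *
    constructor
    · rintro ⟨⟨⟨h1, h2, h3⟩, h4, h5, h6⟩, h7, (⟨h8, h9⟩ | ⟨h8, h9⟩)⟩
      · subst h8
        rcases le_or_gt (lam a) (lam c) with h | h
        · rcases Nat.eq_zero_or_pos b with h0 | h0
          · left; omega
          · right; left; omega
        · right; right; omega
      · subst h8
        rcases le_or_gt (lam c) (lam a) with h | h
        · right; right; omega
        · right; left; omega
    · rintro (h | h | h)
      · obtain ⟨hx, hy⟩ := hz (by omega) (by omega)
        omega
      · omega
      · omega
  · rw [Finset.disjoint_left]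
    rintro ⟨⟨a, b⟩, ⟨c, d⟩⟩ h1 h2
    rw [mA] at h1
    rw [mem_union, mB, mC] at h2
    simp only [mem_dgF, mem_armF] at h2
    omega
  · rw [Finset.disjoint_left]
    rintro ⟨⟨a, b⟩, ⟨c, d⟩⟩ h1 h2
    rw [mB] at h1
    rw [mC] at h2
    simp only [mem_dgF, mem_armF] at h1 h2
    omega

/-- The forbidden relative order of `σ(u) = x`, `σ(v) = y`, `σ(d(u)) = w`. -/
def Bad (x y w : ℕ) : Prop := (w < y ∧ y < x) ∨ (x < w ∧ (y < x ∨ w < y))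

open Classical in
theorem Tstat_eq (n : ℕ) (lam : ℕ → ℕ) (σ : ℕ × ℕ → ℕ) (h : NonAttacking n lam σ) :
    Tstat n lam σ =
      - ∑ u ∈ dgF n lam, ∑ v ∈ armF n lam u,
        if Bad (aug σ u) (aug σ v) (aug σ (dbox u)) then (1 : ℤ) else 0 := by
  have e1 : (((prs n lam).filter fun p => aug σ p.2 < aug σ p.1).card : ℤ) =
      ∑ u ∈ dgF n lam, ∑ v ∈ armF n lam u, if aug σ v < aug σ u then (1 : ℤ) else 0 := by
    rw [← sum_prs (fun u v => if aug σ v < aug σ u then (1 : ℤ) else 0), card_filter]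
    push_cast
    rfl
  have e2 : (((prs n lam).filter fun p => aug σ (dbox p.1) < aug σ p.2).card : ℤ) =
      ∑ u ∈ dgF n lam, ∑ v ∈ armF n lam u, if aug σ (dbox u) < aug σ v then (1 : ℤ) else 0 := by
    rw [← sum_prs (fun u v => if aug σ (dbox u) < aug σ v then (1 : ℤ) else 0), card_filter]
    push_cast
    rfl
  rw [Tstat, coinv, invCard_eq, desF]
  push_cast
  rw [e1, e2, sum_filter, sum_filter]
  have key : ∑ u ∈ dgF n lam, ((armCard n lam u : ℤ)
      - (∑ v ∈ armF n lam u, if aug σ v < aug σ u then (1 : ℤ) else 0)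
      - (∑ v ∈ armF n lam u, if aug σ (dbox u) < aug σ v then (1 : ℤ) else 0)
      + (if aug σ (dbox u) < aug σ u then (armCard n lam u : ℤ) else 0)
      - (if aug σ u ≠ aug σ (dbox u) then (armCard n lam u : ℤ) else 0)) =
      ∑ u ∈ dgF n lam, - ∑ v ∈ armF n lam u,
        if Bad (aug σ u) (aug σ v) (aug σ (dbox u)) then (1 : ℤ) else 0 := by
    refine sum_congr rfl fun u hu => ?_
    have ec : (armCard n lam u : ℤ) = ∑ v ∈ armF n lam u, (1 : ℤ) := by
      simp [armCard]
    have ed : ∀ P : Prop, (if P then (armCard n lam u : ℤ) else 0) =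
        ∑ v ∈ armF n lam u, if P then (1 : ℤ) else 0 := by
      intro P
      split_ifs
      · exact ec
      · simp
    have : ∀ P : Prop, ∀ (i : Decidable P), (@ite _ P i (armCard n lam u : ℤ) 0) =
        ∑ v ∈ armF n lam u, @ite _ P i (1 : ℤ) 0 := by
      intro P i
      split_ifs
      · exact ec
      · simp
    rw [this, this, ec, ← sum_sub_distrib, ← sum_sub_distrib, ← sum_add_distrib,
      ← sum_sub_distrib, ← sum_neg_distrib]
    refine sum_congr rfl fun v hv => ?_
    have hua : u ∈ augF n lam := by
      rw [mem_augF]; rw [mem_dgF] at hu; tauto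
    have hda : dbox u ∈ augF n lam := by
      rw [mem_augF]; rw [mem_dgF] at hu; simp only [dbox]; omega
    have hva := armF_subset u hv
    rw [mem_dgF] at hu
    rw [mem_armF] at hv
    have h1 : aug σ v ≠ aug σ u := by
      apply h v hva u hua
      refine ⟨?_, ?_⟩
      · rintro rfl
        omega
      · omega
    have h2 : aug σ v ≠ aug σ (dbox u) := by
      apply h v hva _ hda
      refine ⟨?_, ?_⟩
      · rintro rfl
        simp only [dbox] at hv
        omega
      · simp only [dbox]; omega
    unfold Bad
    split_ifs <;> omega
  rw [sum_sub_distrib, sum_add_distrib, sum_sub_distrib, sum_sub_distrib, sum_neg_distrib] at key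
  rw [← key]
  ring

theorem Tstat_zero_iff (n : ℕ) (lam : ℕ → ℕ) (σ : ℕ × ℕ → ℕ) (h : NonAttacking n lam σ) :
    Tstat n lam σ = 0 ↔ ∀ u ∈ dgF n lam, ∀ v ∈ armF n lam u,
      ¬ Bad (aug σ u) (aug σ v) (aug σ (dbox u)) := by
  classical
  rw [Tstat_eq n lam σ h, neg_eq_zero, sum_eq_zero_iff_of_nonneg]
  · refine forall₂_congr fun u _ => ?_
    rw [sum_eq_zero_iff_of_nonneg]
    · refine forall₂_congr fun v _ => ?_
      simp
    · intro v _
      split_ifs <;> simp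
  · intro u _
    apply sum_nonneg
    intro v _
    split_ifs <;> simp

theorem greedy_local (S : Set ℕ) (x w : ℕ) (hS : w ∉ S) :
    ((({y ∈ S ∪ {x} | w ≤ y}.Nonempty → x = sInf {y ∈ S ∪ {x} | w ≤ y}) ∧
      (¬ {y ∈ S ∪ {x} | w ≤ y}.Nonempty → x = sInf (S ∪ {x})))) ↔
    ∀ y ∈ S, ¬ Bad x y w := by
  have hx : x ∈ S ∪ {x} := by simp
  constructor
  · rintro ⟨h1, h2⟩ y hy hb
    have hyS : y ∈ S ∪ {x} := by simp [hy]
    rcases hb with ⟨ha, hb⟩ | ⟨ha, hb⟩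
    · have := h1 ⟨y, hyS, ha.le⟩
      have h3 : sInf {y ∈ S ∪ {x} | w ≤ y} ≤ y := Nat.sInf_le ⟨hyS, ha.le⟩
      omega
    · by_cases hne : {y ∈ S ∪ {x} | w ≤ y}.Nonempty
      · have h3 := (Nat.sInf_mem hne).2
        have := h1 hne
        omega
      · have h4 := h2 hne
        have h3 : sInf (S ∪ {x}) ≤ y := Nat.sInf_le hyS
        rcases hb with hb | hb
        · omega
        · exact hne ⟨y, hyS, hb.le⟩
  · intro h
    unfold Bad at h
    constructor
    · intro hne
      have h3 := Nat.sInf_mem hne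
      rcases h3.1 with h4 | h4
      · have h5 := h _ h4
        have h6 := h3.2
        have h7 : sInf {y ∈ S ∪ {x} | w ≤ y} ≠ w := fun e => hS (e ▸ h4)
        rcases le_or_gt w x with hw | hw
        · have h8 : sInf {y ∈ S ∪ {x} | w ≤ y} ≤ x := Nat.sInf_le ⟨hx, hw⟩
          omega
        · omega
      · exact h4.symm
    · intro hne
      have hw : x < w := by
        by_contra hc
        exact hne ⟨x, hx, by omega⟩
      have h3 : sInf (S ∪ {x}) ≤ x := Nat.sInf_le hx
      rcases Nat.sInf_mem (⟨x, hx⟩ : (S ∪ {x}).Nonempty) with h4 | h4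
      · have := h _ h4
        omega
      · exact h4.symm

end CO

namespace CO

/-- The map from boxes of `ν` to boxes of the augmented diagram of `μ`. -/
def phi (n r : ℕ) (u : ℕ × ℕ) : ℕ × ℕ :=
  if u.1 ≤ n - r then (u.1 + r, u.2 - 1) else (u.1 - (n - r), u.2)

/-- The inverse map. -/
def psi (n r : ℕ) (u : ℕ × ℕ) : ℕ × ℕ :=
  if u.1 ≤ r then (u.1 + (n - r), u.2) else (u.1 - r, u.2 + 1)

/-- The standing hypotheses. -/
structure Hyp (n : ℕ) (lam : ℕ → ℕ) (s : ℕ) (nu : ℕ → ℕ) (r : ℕ) (mu : ℕ → ℕ) : Prop where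
  mono : ∀ i j, 1 ≤ i → i ≤ j → j ≤ n → lam i ≤ lam j
  s1 : 1 ≤ s
  sn : s ≤ n
  rs : r ≤ s
  rn : r + 1 ≤ n
  zero : ∀ i, 1 ≤ i → i ≤ n - s → lam i = 0
  pos : ∀ i, n - s + 1 ≤ i → i ≤ n → 1 ≤ lam i
  nu0 : ∀ i, i ≤ n - s → nu i = 0
  nu1 : ∀ i, n - s + 1 ≤ i → nu i = lam i + 1
  mu1 : ∀ i, 1 ≤ i → i ≤ r → mu i = lam (i + (n - r)) + 1
  mu2 : ∀ i, r < i → i ≤ n → mu i = lam (i - r)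

variable {n : ℕ} {lam : ℕ → ℕ} {s : ℕ} {nu : ℕ → ℕ} {r : ℕ} {mu : ℕ → ℕ}

theorem Hyp.mem_nu (H : Hyp n lam s nu r mu) {j h : ℕ} :
    (j, h) ∈ dgF n nu ↔ n - s + 1 ≤ j ∧ j ≤ n ∧ 1 ≤ h ∧ h ≤ lam j + 1 := by
  rw [mem_dgF]
  simp only
  rcases le_or_gt j (n - s) with hj | hj
  · rw [H.nu0 j hj]; omega
  · rw [H.nu1 j hj]; omega

theorem Hyp.mem_arm_nu (H : Hyp n lam s nu r mu) {u : ℕ × ℕ} (hu : u ∈ dgF n nu) {v : ℕ × ℕ} :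
    v ∈ armF n nu u ↔ v ∈ dgF n nu ∧ v.1 < u.1 ∧ v.2 = u.2 := by
  obtain ⟨j, h⟩ := u
  obtain ⟨j', h'⟩ := v
  rw [H.mem_nu] at hu
  rw [mem_armF, mem_dgF]
  simp only
  have hm : ∀ a b, 1 ≤ a → a ≤ b → b ≤ n → nu a ≤ nu b := by
    intro a b h1 h2 h3
    have := H.mono a b h1 h2 h3
    rcases le_or_gt a (n - s) with ha | ha
    · rw [H.nu0 a ha]; omega
    · rw [H.nu1 a ha, H.nu1 b (by omega)]; omega
  constructor
  · rintro ⟨h1, h2, h3, h4 | h4⟩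
    · omega
    · have := hm j j' (by omega) (by omega) (by omega)
      omega
  · rintro ⟨⟨h1, h2, h3, h4⟩, h5, h6⟩
    have := hm j' j (by omega) (by omega) (by omega)
    omega

theorem Hyp.mu_left (H : Hyp n lam s nu r mu) {j : ℕ} (h1 : 1 ≤ j) (h2 : j ≤ n - r) :
    mu (j + r) = lam j := by
  have := H.rn
  rw [H.mu2 _ (by omega) (by omega)]
  congr 1; omega

theorem Hyp.mu_right (H : Hyp n lam s nu r mu) {j : ℕ} (h1 : n - r < j) (h2 : j ≤ n) :
    mu (j - (n - r)) = lam j + 1 := by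
  have := H.rn
  rw [H.mu1 _ (by omega) (by omega)]
  congr 2; omega

theorem Hyp.phi_mem (H : Hyp n lam s nu r mu) {u : ℕ × ℕ} (hu : u ∈ dgF n nu) :
    phi n r u ∈ augF n mu ∧ psi n r (phi n r u) = u ∧ (2 ≤ u.2 → phi n r u ∈ dgF n mu) := by
  obtain ⟨j, h⟩ := u
  rw [H.mem_nu] at hu
  have := H.rn
  have := H.rs
  have := H.sn
  rw [mem_augF, mem_dgF]
  by_cases hj : j ≤ n - r
  · have e : phi n r (j, h) = (j + r, h - 1) := if_pos hj
    have := H.mu_left (by omega : 1 ≤ j) hj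
    rw [e]
    simp only [this]
    refine ⟨by omega, ?_, by omega⟩
    unfold psi
    rw [if_neg (by simp only; omega)]
    ext <;> simp only <;> omega
  · have e : phi n r (j, h) = (j - (n - r), h) := if_neg hj
    have := H.mu_right (by omega : n - r < j) (by omega)
    rw [e]
    simp only [this]
    refine ⟨by omega, ?_, by omega⟩
    unfold psi
    rw [if_pos (by simp only; omega)]
    ext <;> simp only <;> omega

theorem Hyp.psi_mem (H : Hyp n lam s nu r mu) {u : ℕ × ℕ} (hu : u ∈ augF n mu)
    (hu' : 1 ≤ u.2 ∨ n - s + r < u.1) :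
    psi n r u ∈ dgF n nu ∧ phi n r (psi n r u) = u ∧ (1 ≤ u.2 → r < u.1 ∨ 2 ≤ u.2 → 2 ≤ (psi n r u).2) := by
  obtain ⟨i, h⟩ := u
  rw [mem_augF] at hu
  have := H.rn
  have := H.rs
  have := H.sn
  simp only at hu hu'
  by_cases hi : i ≤ r
  · have e : psi n r (i, h) = (i + (n - r), h) := if_pos hi
    rw [e, H.mem_nu]
    have e2 := H.mu1 i (by omega) hi
    refine ⟨by omega, ?_, by simp only; omega⟩
    unfold phi
    rw [if_neg (by simp only; omega)]
    ext <;> simp only <;> omega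
  · have e : psi n r (i, h) = (i - r, h + 1) := if_neg hi
    rw [e, H.mem_nu]
    have e2 := H.mu2 i (by omega) (by omega)
    have e3 := H.zero (i - r) (by omega)
    refine ⟨by omega, ?_, by simp only; omega⟩
    unfold phi
    rw [if_pos (by simp only; omega)]
    ext <;> simp only <;> omega

theorem Hyp.dbox_phi (H : Hyp n lam s nu r mu) {u : ℕ × ℕ} (hu : u ∈ dgF n nu) (h2 : 2 ≤ u.2) :
    dbox u ∈ dgF n nu ∧ phi n r (dbox u) = dbox (phi n r u) := by
  obtain ⟨j, h⟩ := u
  simp only at h2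
  refine ⟨?_, ?_⟩
  · simp only [dbox]
    rw [H.mem_nu] at hu ⊢
    omega
  · by_cases hj : j ≤ n - r <;> simp [dbox, phi, hj]

theorem Hyp.attack_phi (H : Hyp n lam s nu r mu) {u v : ℕ × ℕ} (hu : u ∈ dgF n nu)
    (hv : v ∈ dgF n nu) : Attack (phi n r u) (phi n r v) ↔ Attack u v := by
  have hne : phi n r u ≠ phi n r v ↔ u ≠ v := by
    refine not_congr ⟨fun h => ?_, fun h => h ▸ rfl⟩
    rw [← (H.phi_mem hu).2.1, ← (H.phi_mem hv).2.1, h]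
  unfold Attack
  rw [hne]
  refine and_congr_right fun _ => ?_
  obtain ⟨j, h⟩ := u
  obtain ⟨j', h'⟩ := v
  rw [H.mem_nu] at hu hv
  have := H.rn
  unfold phi
  simp only
  split_ifs <;> simp only <;> omega

theorem Hyp.arm_phi (H : Hyp n lam s nu r mu) {u v : ℕ × ℕ} (hu : u ∈ dgF n nu) (h2 : 2 ≤ u.2)
    (hv : v ∈ armF n nu u) : phi n r v ∈ armF n mu (phi n r u) := by
  rw [H.mem_arm_nu hu] at hv
  obtain ⟨hv, h3, h4⟩ := hv
  obtain ⟨j, h⟩ := u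
  obtain ⟨j', h'⟩ := v
  rw [H.mem_nu] at hu hv
  have := H.rn
  have := H.rs
  have := H.sn
  simp only at h2 h3 h4
  subst h4
  have hm := H.mono j' j (by omega) (by omega) (by omega)
  rw [mem_armF]
  by_cases hj : j ≤ n - r
  · have e : phi n r (j, h') = (j + r, h' - 1) := if_pos hj
    have e' : phi n r (j', h') = (j' + r, h' - 1) := if_pos (by simp only; omega)
    have := H.mu_left (by omega : 1 ≤ j) hj
    have := H.mu_left (by omega : 1 ≤ j') (by omega)
    rw [e, e']
    simp only [true_and]
    omega
  · have e : phi n r (j, h') = (j - (n - r), h') := if_neg hj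
    have := H.mu_right (by omega : n - r < j) (by omega)
    by_cases hj' : j' ≤ n - r
    · have e' : phi n r (j', h') = (j' + r, h' - 1) := if_pos (by simp only; omega)
      have := H.mu_left (by omega : 1 ≤ j') (by omega)
      rw [e, e']
      simp only [true_and]
      omega
    · have e' : phi n r (j', h') = (j' - (n - r), h') := if_neg hj'
      have := H.mu_right (by omega : n - r < j') (by omega)
      rw [e, e']
      simp only [true_and]
      omega

theorem Hyp.arm_psi (H : Hyp n lam s nu r mu) {u v : ℕ × ℕ} (hu : u ∈ dgF n nu) (h2 : 2 ≤ u.2)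
    (hv : v ∈ armF n mu (phi n r u)) : psi n r v ∈ armF n nu u ∧ phi n r (psi n r v) = v := by
  have hva := armF_subset _ hv
  rw [mem_armF] at hv
  have hu0 := hu
  obtain ⟨j, h⟩ := u
  obtain ⟨i, h'⟩ := v
  rw [H.mem_nu] at hu
  have := H.rn
  have := H.rs
  have := H.sn
  simp only at h2 hv
  have hpos : 1 ≤ h' := by
    unfold phi at hv
    split_ifs at hv with hj
    · simp only at hv hj
      rcases hv.2.2.2 with h5 | h5
      · omega
      · obtain ⟨h5, h6, h7⟩ := h5
        rw [H.mu_left (by omega) hj, H.mu2 i (by omega) (by omega)] at h7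
        have := H.mono j (i - r) (by omega) (by omega) (by omega)
        omega
    · simp only at hv
      omega
  have hp := H.psi_mem hva (Or.inl hpos)
  refine ⟨?_, hp.2.1⟩
  rw [H.mem_arm_nu hu0]
  refine ⟨hp.1, ?_⟩
  unfold psi
  unfold phi at hv
  by_cases hi : i ≤ r
  · rw [if_pos (by simp only; omega)]
    simp only at hv ⊢
    have e2 := H.mu1 i (by omega) hi
    by_cases hj : j ≤ n - r
    · rw [if_pos hj] at hv
      simp only at hv
      have e3 := H.mu_left (by omega : 1 ≤ j) hj
      have := H.mono j (i + (n - r)) (by omega) (by omega) (by omega)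
      omega
    · rw [if_neg hj] at hv
      simp only at hv
      have e3 := H.mu_right (by omega : n - r < j) (by omega)
      rcases hv.2.2.2 with h5 | h5
      · omega
      · have := H.mono j (i + (n - r)) (by omega) (by omega) (by omega)
        omega
  · rw [if_neg (by simp only; omega)]
    simp only at hv ⊢
    have e2 := H.mu2 i (by omega) (by omega)
    by_cases hj : j ≤ n - r
    · rw [if_pos hj] at hv
      simp only at hv
      have e3 := H.mu_left (by omega : 1 ≤ j) hj
      rcases hv.2.2.2 with h5 | h5
      · omega
      · have := H.mono j (i - r) (by omega) (by omega) (by omega)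
        omega
    · rw [if_neg hj] at hv
      simp only at hv
      omega

/-- Conditions (i)-(iii). -/
def DCond (n : ℕ) (mu : ℕ → ℕ) (a : ℕ → ℕ) (τ : ℕ × ℕ → ℕ) : Prop :=
  (∀ u ∈ dgF n mu, 1 ≤ τ u ∧ τ u ≤ n) ∧
    (∀ j, (j, 1) ∈ dgF n mu → τ (j, 1) = a j) ∧
    (∀ u ∈ dgF n mu, ∀ v ∈ dgF n mu, Attack u v → τ u ≠ τ v) ∧
    GreedyRule n mu τ

theorem Hyp.greedy_iff (H : Hyp n lam s nu r mu) (τ : ℕ × ℕ → ℕ)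
    (hna : ∀ u ∈ dgF n nu, ∀ v ∈ dgF n nu, Attack u v → τ u ≠ τ v) :
    GreedyRule n nu τ ↔ ∀ u ∈ dgF n nu, 2 ≤ u.2 → ∀ v ∈ armF n nu u,
      ¬ Bad (τ u) (τ v) (τ (dbox u)) := by
  unfold GreedyRule
  refine forall₃_congr fun u hu h2 => ?_
  rw [greedy_local]
  · rw [Set.forall_mem_image]
    simp only [mem_coe]
  · rintro ⟨v, hv, hvw⟩
    rw [mem_coe, H.mem_arm_nu hu] at hv
    refine hna v hv.1 (dbox u) (H.dbox_phi hu h2).1 ?_ hvw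
    refine ⟨?_, ?_⟩
    · rintro rfl
      simp [dbox] at hv
    · simp only [dbox]
      omega

theorem aug_of_pos {σ : ℕ × ℕ → ℕ} {u : ℕ × ℕ} (h : 1 ≤ u.2) : aug σ u = σ u :=
  if_neg (by omega)

theorem Hyp.row_one (H : Hyp n lam s nu r mu) {σ : ℕ × ℕ → ℕ} (hf : IsFilling n mu σ)
    (hna : NonAttacking n mu σ) : ∀ i, 1 ≤ i → i ≤ r → σ (i, 1) = i := by
  have := H.rn
  intro i
  induction i using Nat.strong_induction_on with
  | _ i ih =>
    intro h1 h2
    have hm : ∀ k, 1 ≤ k → k ≤ r → (k, 1) ∈ dgF n mu := by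
      intro k hk hk2
      rw [mem_dgF]
      simp only
      rw [H.mu1 k hk hk2]
      omega
    have hma : ∀ k, 1 ≤ k → k ≤ r → (k, 1) ∈ augF n mu := fun k a b => mem_union_left _ (hm k a b)
    have hb := hf _ (hm i h1 h2)
    rcases lt_trichotomy (σ (i, 1)) i with h | h | h
    · exfalso
      have e := ih _ h hb.1 (by omega)
      refine hna (σ (i, 1), 1) (hma _ hb.1 (by omega)) (i, 1) (hma _ h1 h2) ⟨?_, Or.inl rfl⟩ ?_
      · intro h'
        simp only [Prod.mk.injEq] at h'
        omega
      · rw [aug_of_pos le_rfl, aug_of_pos le_rfl, e]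
    · exact h
    · exfalso
      refine hna (i, 1) (hma _ h1 h2) (σ (i, 1), 0) ?_ ⟨?_, Or.inr (Or.inl ⟨rfl, h⟩)⟩ ?_
      · rw [mem_augF]
        simp only
        omega
      · simp
      · rw [aug_of_pos le_rfl]
        simp [aug]

/-- The first row. -/
def aRow (n r : ℕ) : ℕ → ℕ := fun j => if j ≤ n - r then j + r else j - (n - r)

theorem Hyp.fwd (H : Hyp n lam s nu r mu) {σ τ : ℕ × ℕ → ℕ} (hσ : Appropriate n mu σ)
    (hl : ∀ u ∈ dgF n nu, τ u = aug σ (phi n r u)) : DCond n nu (aRow n r) τ := by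
  obtain ⟨hf, hna, hT⟩ := hσ
  rw [Tstat_zero_iff n mu σ hna] at hT
  have := H.rn
  have := H.rs
  have := H.sn
  have hr1 : ∀ j, (j, 1) ∈ dgF n nu → τ (j, 1) = aRow n r j := by
    intro j hj
    rw [hl _ hj]
    rw [H.mem_nu] at hj
    unfold phi aRow
    by_cases h : j ≤ n - r
    · rw [if_pos h, if_pos h]
      simp [aug]
    · rw [if_neg h, if_neg h, aug_of_pos le_rfl, H.row_one hf hna _ (by omega) (by omega)]
  have hna' : ∀ u ∈ dgF n nu, ∀ v ∈ dgF n nu, Attack u v → τ u ≠ τ v := by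
    intro u hu v hv ha
    rw [hl u hu, hl v hv]
    exact hna _ (H.phi_mem hu).1 _ (H.phi_mem hv).1 ((H.attack_phi hu hv).2 ha)
  refine ⟨?_, hr1, hna', ?_⟩
  · intro u hu
    rcases Nat.lt_or_ge u.2 2 with h | h
    · obtain ⟨j, h'⟩ := u
      have hu' := hu
      rw [H.mem_nu] at hu'
      have : h' = 1 := by simp only at h; omega
      subst this
      rw [hr1 j hu]
      unfold aRow
      split_ifs <;> omega
    · have hm := (H.phi_mem hu).2.2 h
      rw [hl u hu, aug_of_pos (mem_dgF.1 hm).2.2.1]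
      exact hf _ hm
  · rw [H.greedy_iff τ hna']
    intro u hu h2 v hv
    have hd := H.dbox_phi hu h2
    rw [hl u hu, hl v ((H.mem_arm_nu hu).1 hv).1, hl _ hd.1, hd.2]
    exact hT _ ((H.phi_mem hu).2.2 h2) _ (H.arm_phi hu h2 hv)

theorem Hyp.bwd (H : Hyp n lam s nu r mu) {σ τ : ℕ × ℕ → ℕ} (hτ : DCond n nu (aRow n r) τ)
    (hl : ∀ u ∈ dgF n mu, σ u = τ (psi n r u)) :
    Appropriate n mu σ ∧ ∀ u ∈ dgF n nu, τ u = aug σ (phi n r u) := by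
  obtain ⟨hf, hr1, hna, hG⟩ := hτ
  rw [H.greedy_iff τ hna] at hG
  have := H.rn
  have := H.rs
  have := H.sn
  have hl' : ∀ u ∈ dgF n nu, τ u = aug σ (phi n r u) := by
    intro u hu
    have hp := H.phi_mem hu
    by_cases h0 : (phi n r u).2 = 0
    · obtain ⟨j, h⟩ := u
      have hu' := hu
      rw [H.mem_nu] at hu'
      rw [aug, if_pos h0]
      unfold phi at h0 ⊢
      by_cases hj : j ≤ n - r
      · rw [if_pos hj] at h0 ⊢
        simp only at h0 ⊢
        have : h = 1 := by omega
        subst this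
        rw [hr1 j hu, aRow, if_pos hj]
      · rw [if_neg hj] at h0
        simp only at h0
        omega
    · rw [aug_of_pos (by omega), hl, hp.2.1]
      have h1 := hp.1
      rw [mem_augF] at h1
      rw [mem_dgF]
      omega
  have hrow : ∀ i, 1 ≤ i → i ≤ r → σ (i, 1) = i := by
    intro i h1 h2
    have hm : (i, 1) ∈ dgF n mu := by
      rw [mem_dgF]
      simp only
      rw [H.mu1 i h1 h2]
      omega
    have hm2 := (H.psi_mem (mem_union_left _ hm) (Or.inl le_rfl)).1
    rw [hl _ hm]
    unfold psi at hm2 ⊢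
    rw [if_pos h2] at hm2 ⊢
    simp only at hm2 ⊢
    rw [hr1 _ hm2, aRow, if_neg (by omega)]
    omega
  have hna' : NonAttacking n mu σ := by
    have key : ∀ u ∈ augF n mu, ∀ v ∈ augF n mu, u.2 = 0 → u.1 ≤ n - s + r → Attack u v →
        aug σ u ≠ aug σ v := by
      rintro ⟨i, h⟩ hu ⟨i', h'⟩ hv h0 h1 ha
      simp only at h0 h1
      subst h0
      unfold Attack at ha
      rw [mem_augF] at hu hv
      simp only at ha hu hv
      have hne : i ≠ i' := by
        rintro rfl
        simp at ha
      have e1 : aug σ (i, 0) = i := if_pos rfl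
      have e2 : aug σ (i', h') = i' := by
        by_cases hh : h' = 0
        · exact if_pos hh
        · have h1' : h' = 1 := by omega
          subst h1'
          rw [aug_of_pos le_rfl]
          apply hrow _ (by omega)
          by_contra hc
          have e3 := H.mu2 i' (by omega) (by omega)
          have e4 := H.zero (i' - r) (by omega) (by omega)
          omega
      rw [e1, e2]
      exact hne
    have hsym : ∀ u v, Attack u v → Attack v u := by
      intro u v h
      exact ⟨h.1.symm, by have := h.2; omega⟩
    intro u hu v hv ha
    by_cases hu0 : u.2 = 0 ∧ u.1 ≤ n - s + r
    · exact key u hu v hv hu0.1 hu0.2 ha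
    by_cases hv0 : v.2 = 0 ∧ v.1 ≤ n - s + r
    · exact (key v hv u hu hv0.1 hv0.2 (hsym _ _ ha)).symm
    have pu := H.psi_mem hu (by omega)
    have pv := H.psi_mem hv (by omega)
    have h1 := hna _ pu.1 _ pv.1 ((H.attack_phi pu.1 pv.1).1 (by rw [pu.2.1, pv.2.1]; exact ha))
    rw [hl' _ pu.1, hl' _ pv.1, pu.2.1, pv.2.1] at h1
    exact h1
  refine ⟨⟨?_, hna', ?_⟩, hl'⟩
  · intro u hu
    rw [hl u hu]
    exact hf _ (H.psi_mem (mem_union_left _ hu) (Or.inl (mem_dgF.1 hu).2.2.1)).1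
  · rw [Tstat_zero_iff n mu σ hna']
    intro u hu v hv
    have hu1 := (mem_dgF.1 hu)
    by_cases hc : r < u.1 ∨ 2 ≤ u.2
    · have pu := H.psi_mem (mem_union_left _ hu) (Or.inl hu1.2.2.1)
      have h2 := pu.2.2 hu1.2.2.1 hc
      rw [← pu.2.1] at hv
      have pv := H.arm_psi pu.1 h2 hv
      have := hG _ pu.1 h2 _ pv.1
      have hd := H.dbox_phi pu.1 h2
      rw [hl' _ pu.1, hl' _ ((H.mem_arm_nu pu.1).1 pv.1).1, hl' _ hd.1, hd.2, pu.2.1, pv.2] at this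
      exact this
    · have e : u = (u.1, 1) := by
        ext
        · rfl
        · simp only; omega
      have e1 : aug σ u = u.1 := by
        rw [e, aug_of_pos le_rfl, hrow _ hu1.1 (by omega)]
      have e2 : aug σ (dbox u) = u.1 := by
        rw [e]
        rfl
      rw [e1, e2]
      unfold Bad
      omega

theorem Hyp.stat (H : Hyp n lam s nu r mu) {σ τ : ℕ × ℕ → ℕ} (hσ : Appropriate n mu σ)
    (hl : ∀ u ∈ dgF n nu, τ u = aug σ (phi n r u)) : qstat n mu σ = ascStat n nu τ := by
  have hrow := H.row_one hσ.1 hσ.2.1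
  have := H.rn
  have := H.rs
  have := H.sn
  unfold qstat ascStat
  have hne : ∀ u ∈ (dgF n mu).filter (fun u => aug σ u < aug σ (dbox u)),
      r < u.1 ∨ 2 ≤ u.2 := by
    intro u hu
    rw [mem_filter, mem_dgF] at hu
    by_contra hc
    have e : u = (u.1, 1) := by
      ext
      · rfl
      · simp only; omega
    have e1 : aug σ u = u.1 := by
      rw [e, aug_of_pos le_rfl, hrow _ (by omega) (by omega)]
    have e2 : aug σ (dbox u) = u.1 := by
      rw [e]
      rfl
    omega
  refine sum_nbij' (psi n r) (phi n r) ?_ ?_ ?_ ?_ ?_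
  · intro u hu
    have hc := hne u hu
    rw [mem_filter] at hu
    obtain ⟨hu, hlt⟩ := hu
    have hu1 := (mem_dgF.1 hu)
    have pu := H.psi_mem (mem_union_left _ hu) (Or.inl hu1.2.2.1)
    have h2 := pu.2.2 hu1.2.2.1 hc
    have hd := H.dbox_phi pu.1 h2
    rw [mem_filter, hl _ pu.1, hl _ hd.1, hd.2, pu.2.1]
    exact ⟨pu.1, h2, hlt⟩
  · intro u hu
    rw [mem_filter] at hu
    obtain ⟨hu, h2, hlt⟩ := hu
    have hd := H.dbox_phi hu h2
    rw [hl _ hu, hl _ hd.1, hd.2] at hlt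
    rw [mem_filter]
    exact ⟨(H.phi_mem hu).2.2 h2, hlt⟩
  · intro u hu
    rw [mem_filter] at hu
    exact (H.psi_mem (mem_union_left _ hu.1) (Or.inl (mem_dgF.1 hu.1).2.2.1)).2.1
  · intro u hu
    rw [mem_filter] at hu
    exact (H.phi_mem hu.1).2.1
  · rintro ⟨i, h⟩ hu
    rw [mem_filter] at hu
    have hu1 := (mem_dgF.1 hu.1)
    have pu := (H.psi_mem (mem_union_left _ hu.1) (Or.inl hu1.2.2.1)).1
    simp only at hu1
    unfold psi at pu ⊢
    by_cases hi : i ≤ r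
    · rw [if_pos hi] at pu ⊢
      rw [H.mem_nu] at pu
      simp only
      rw [H.mu1 i (by omega) hi, H.nu1 _ (by omega)]
    · rw [if_neg hi] at pu ⊢
      rw [H.mem_nu] at pu
      simp only
      rw [H.mu2 i (by omega) (by omega), H.nu1 _ (by omega)]
      omega

theorem Hyp.content (H : Hyp n lam s nu r mu) {σ τ : ℕ × ℕ → ℕ}
    (hl : ∀ u ∈ dgF n nu, τ u = aug σ (phi n r u)) (i : ℕ) (hi : i ≤ n) :
    ((dgF n nu).filter fun u => τ u = i).card =
      ((dgF n mu).filter fun u => σ u = i).card + if n - s + r + 1 ≤ i then 1 else 0 := by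
  have := H.rn
  have := H.rs
  have := H.sn
  rw [← card_filter_add_card_filter_not (s := (dgF n nu).filter fun u => τ u = i)
    (fun u => (phi n r u).2 ≠ 0)]
  congr 1
  · refine card_nbij' (phi n r) (psi n r) ?_ ?_ ?_ ?_
    · intro u hu
      simp only [coe_filter, Set.mem_ofPred_eq, mem_filter] at hu ⊢
      obtain ⟨⟨hu, h1⟩, h2⟩ := hu
      have hp := (H.phi_mem hu).1
      rw [hl u hu, aug_of_pos (by omega)] at h1
      refine ⟨?_, h1⟩
      rw [mem_augF] at hp
      rw [mem_dgF]
      omega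
    · intro u hu
      simp only [coe_filter, Set.mem_ofPred_eq, mem_filter] at hu ⊢
      have hu1 := (mem_dgF.1 hu.1)
      have pu := (H.psi_mem (mem_union_left _ hu.1) (Or.inl hu1.2.2.1))
      rw [hl _ pu.1, pu.2.1, aug_of_pos hu1.2.2.1]
      exact ⟨⟨pu.1, hu.2⟩, by omega⟩
    · intro u hu
      simp only [coe_filter, Set.mem_ofPred_eq, mem_filter] at hu
      exact (H.phi_mem hu.1.1).2.1
    · intro u hu
      simp only [coe_filter, Set.mem_ofPred_eq] at hu
      exact (H.psi_mem (mem_union_left _ hu.1) (Or.inl (mem_dgF.1 hu.1).2.2.1)).2.1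
  · have hz : ∀ u ∈ dgF n nu, (phi n r u).2 = 0 → u.1 ≤ n - r ∧ u.2 = 1 ∧ τ u = u.1 + r ∧ n - s + 1 ≤ u.1 := by
      rintro ⟨j, h⟩ hu h0
      rw [hl _ hu, aug, if_pos h0]
      rw [H.mem_nu] at hu
      unfold phi at h0 ⊢
      by_cases hj : j ≤ n - r
      · rw [if_pos hj] at h0 ⊢
        simp only [true_and] at h0 ⊢
        omega
      · rw [if_neg hj] at h0
        simp only at h0
        omega
    split_ifs with hc
    · rw [card_eq_one]
      refine ⟨(i - r, 1), ?_⟩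
      ext u
      rw [mem_filter, mem_filter, mem_singleton]
      constructor
      · rintro ⟨⟨hu, h1⟩, h2⟩
        have := hz u hu (by omega)
        ext <;> simp only <;> omega
      · rintro rfl
        have hm : (i - r, 1) ∈ dgF n nu := by
          rw [H.mem_nu]
          omega
        have h0 : (phi n r (i - r, 1)).2 = 0 := by
          unfold phi
          rw [if_pos (by simp only; omega)]
          rfl
        have := hz _ hm h0
        simp only at this
        exact ⟨⟨hm, by omega⟩, by omega⟩
    · rw [card_eq_zero, filter_eq_empty_iff]
      intro u hu
      rw [mem_filter] at hu
      intro h0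
      have := hz u hu.1 (by omega)
      omega

end CO

namespace CO

theorem iter_piComp (n : ℕ) (lam : ℕ → ℕ) (r : ℕ) (hr : r + 1 ≤ n) :
    ∀ i, 1 ≤ i → i ≤ n → (piComp n)^[r] lam i =
      if i ≤ r then lam (i + (n - r)) + 1 else lam (i - r) := by
  induction r with
  | zero =>
    intro i h1 h2
    rw [if_neg (by omega)]
    rfl
  | succ r ih =>
    intro i h1 h2
    rw [Function.iterate_succ_apply']
    unfold piComp
    by_cases hi : i = 1
    · subst hi
      rw [if_pos rfl, if_pos (by omega)]
      have := ih (by omega) n (by omega) le_rfl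
      rw [if_neg (by omega)] at this
      unfold piComp at this
      rw [this]
      congr 2
      omega
    · rw [if_neg hi]
      have := ih (by omega) (i - 1) (by omega) (by omega)
      unfold piComp at this
      rw [this]
      by_cases h : i ≤ r + 1
      · rw [if_pos (by omega), if_pos h]
        congr 2
        omega
      · rw [if_neg (by omega), if_neg h]
        congr 1
        omega

theorem ext_mem {n : ℕ} {lam : ℕ → ℕ} (f : {u // u ∈ dgF n lam} → ℕ) {u : ℕ × ℕ}
    (h : u ∈ dgF n lam) : ext n lam f u = f ⟨u, h⟩ := dif_pos h

variable {n : ℕ} {lam : ℕ → ℕ} {s : ℕ} {nu : ℕ → ℕ} {r : ℕ} {mu : ℕ → ℕ}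

/-- Multiplicity of the value `i` in a filling. -/
def cont (n : ℕ) (nu : ℕ → ℕ) (τ : ℕ × ℕ → ℕ) (i : ℕ) : ℕ :=
  ((dgF n nu).filter fun u => τ u = i).card

open Classical in
theorem cCoef_eq (n : ℕ) (nu a K : ℕ → ℕ) :
    cCoef n nu a K = ∑ f ∈ (Fintype.piFinset fun _ : {u // u ∈ dgF n nu} => Finset.Icc 1 n).filter
      fun f => DCond n nu a (ext n nu f),
      if (∀ i, 1 ≤ i → i ≤ n → cont n nu (ext n nu f) i = K i) then
        Polynomial.X ^ ascStat n nu (ext n nu f) else 0 := by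
  unfold cCoef
  rw [sum_filter, sum_filter]
  refine sum_congr rfl fun f _ => ?_
  have e : CCond n nu a K (ext n nu f) ↔ DCond n nu a (ext n nu f) ∧
      ∀ i, 1 ≤ i → i ≤ n → cont n nu (ext n nu f) i = K i := by
    simp only [CCond, DCond, cont, and_assoc]
  by_cases h1 : DCond n nu a (ext n nu f)
  · by_cases h2 : ∀ i, 1 ≤ i → i ≤ n → cont n nu (ext n nu f) i = K i
    · rw [if_pos (e.2 ⟨h1, h2⟩), if_pos h1, if_pos h2]
    · rw [if_neg (fun h => h2 (e.1 h).2), if_pos h1, if_neg h2]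
  · rw [if_neg (fun h => h1 (e.1 h).1), if_neg h1]

theorem Hyp.cont_pos (H : Hyp n lam s nu r mu) {τ : ℕ × ℕ → ℕ} (hτ : DCond n nu (aRow n r) τ)
    {i : ℕ} (h1 : 1 ≤ i) (h2 : i ≤ n) (h : i ≤ r ∨ n - s + r + 1 ≤ i) : 1 ≤ cont n nu τ i := by
  have := H.rn
  have := H.rs
  have := H.sn
  have key : ∀ j, n - s + 1 ≤ j → j ≤ n → aRow n r j = i → 1 ≤ cont n nu τ i := by
    intro j hj hj2 ha
    have hm : (j, 1) ∈ dgF n nu := by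
      rw [H.mem_nu]
      omega
    apply Finset.card_pos.2
    exact ⟨(j, 1), mem_filter.2 ⟨hm, by rw [hτ.2.1 j hm, ha]⟩⟩
  rcases h with h | h
  · apply key (i + (n - r)) (by omega) (by omega)
    unfold aRow
    rw [if_neg (by omega)]
    omega
  · apply key (i - r) (by omega) (by omega)
    unfold aRow
    rw [if_pos (by omega)]
    omega

open Classical in
theorem Hyp.sum_k (H : Hyp n lam s nu r mu) {τ : ℕ × ℕ → ℕ} (hτ : DCond n nu (aRow n r) τ)
    (P : Polynomial ℤ) :
    ∑ k ∈ Fintype.piFinset fun _ : Fin n => Finset.range ((dgF n nu).card + 1),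
      MvPolynomial.C (if (∀ i, 1 ≤ i → i ≤ n → cont n nu τ i =
          if i ≤ r ∨ n - s + r + 1 ≤ i then liftFin n k i + 1 else liftFin n k i) then
        P else 0) *
        ∏ i : Fin n, (MvPolynomial.X i : MvPolynomial (Fin n) (Polynomial ℤ)) ^
                (k i + if (i : ℕ) + 1 ≤ r then 1 else 0) =
      MvPolynomial.C P * ∏ i : Fin n, (MvPolynomial.X i : MvPolynomial (Fin n) (Polynomial ℤ)) ^
        (cont n nu τ ((i : ℕ) + 1) - if n - s + r + 1 ≤ (i : ℕ) + 1 then 1 else 0) := by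
  have := H.rn
  have := H.rs
  have := H.sn
  have hlift : ∀ (k : Fin n → ℕ) (i : Fin n), liftFin n k ((i : ℕ) + 1) = k i := by
    intro k i
    unfold liftFin
    rw [dif_pos (by have := i.2; omega)]
    rfl
  set k0 : Fin n → ℕ := fun i => cont n nu τ ((i : ℕ) + 1) -
    if (i : ℕ) + 1 ≤ r ∨ n - s + r + 1 ≤ (i : ℕ) + 1 then 1 else 0 with hk0
  have hk0m : ∀ i, 1 ≤ i → i ≤ n → cont n nu τ i =
          if i ≤ r ∨ n - s + r + 1 ≤ i then liftFin n k0 i + 1 else liftFin n k0 i := by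
    intro i h1 h2
    obtain ⟨m, rfl⟩ : ∃ m, i = m + 1 := ⟨i - 1, by omega⟩
    have e := hlift k0 ⟨m, by omega⟩
    simp only at e
    rw [e, hk0]
    simp only
    have := H.cont_pos hτ h1 h2
    split_ifs with hc
    · have := this hc
      omega
    · omega
  rw [sum_eq_single k0]
  · rw [if_pos hk0m]
    congr 1
    refine prod_congr rfl fun i _ => ?_
    congr 1
    rw [hk0]
    simp only
    have := H.cont_pos hτ (i := (i : ℕ) + 1) (by omega) (by have := i.2; omega)
    by_cases h1 : (i : ℕ) + 1 ≤ r
    · have := this (Or.inl h1)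
      rw [if_pos (Or.inl h1), if_pos h1, if_neg (by omega)]
      omega
    · by_cases h2 : n - s + r + 1 ≤ (i : ℕ) + 1
      · rw [if_pos (Or.inr h2), if_neg h1, if_pos h2]
        omega
      · rw [if_neg (by tauto), if_neg h1, if_neg h2]
        omega
  · intro k _ hne
    rw [if_neg, map_zero, zero_mul]
    intro hk
    apply hne
    ext i
    have h1 := hk ((i : ℕ) + 1) (by omega) (by have := i.2; omega)
    rw [hlift] at h1
    rw [hk0]
    simp only
    rw [h1]
    split_ifs <;> omega
  · intro hk
    exfalso
    apply hk
    rw [Fintype.mem_piFinset]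
    intro i
    rw [mem_range, hk0]
    have : cont n nu τ ((i : ℕ) + 1) ≤ (dgF n nu).card := card_filter_le _ _
    simp only
    omega

end CO

open CO in
open Classical in
/-- Proposition `interpretationscrollledc`. The generating
function `Σ_σ q^{qstat(σ)} x^{k(σ)}` over appropriate fillings of `dg'(π^r λ)`
equals
`Σ_k c^ν_{(n-s+r+1,…,n,1,…,r)}(k₁+1,…,k_r+1,k_{r+1},…,k_{n-s+r},k_{n-s+r+1}+1,…,k_n+1)
· x₁^{k₁+1}⋯x_r^{k_r+1} x_{r+1}^{k_{r+1}}⋯x_n^{k_n}`, where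
`ν = (0,…,0,λ_{n-s+1}+1,…,λ_n+1)`. (The sum over `k` is finite: all terms with an
entry exceeding the number of boxes of `dg'(ν)` vanish.) -/
theorem scrolled_generating_function (n : ℕ) (hn : 1 ≤ n) (lam : ℕ → ℕ)
    (hanti : Antidominant n lam)
    (s : ℕ) (hs1 : 1 ≤ s) (hsn : s ≤ n)
    (hzero : ∀ i, 1 ≤ i → i ≤ n - s → lam i = 0) (hpos : 1 ≤ lam (n - s + 1))
    (nu : ℕ → ℕ) (hnu : nu = fun i => if n - s + 1 ≤ i then lam i + 1 else 0)
    (r : ℕ) (hrs : r ≤ s) (hrn : r ≤ n - 1)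
    (mu : ℕ → ℕ) (hmu : mu = (piComp n)^[r] lam) :
    (∑ f ∈ (Fintype.piFinset fun _ : {u // u ∈ dgF n mu} => Finset.Icc 1 n).filter
        fun f => Appropriate n mu (ext n mu f),
      MvPolynomial.C (Polynomial.X ^ qstat n mu (ext n mu f)) *
        ∏ i : Fin n,
          (MvPolynomial.X i : MvPolynomial (Fin n) (Polynomial ℤ)) ^
            ((dgF n mu).filter fun u => ext n mu f u = (i : ℕ) + 1).card)
      = ∑ k ∈ Fintype.piFinset fun _ : Fin n => Finset.range ((dgF n nu).card + 1),
          MvPolynomial.C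
            (cCoef n nu (fun j => if j ≤ n - r then j + r else j - (n - r))
              fun i => if i ≤ r ∨ n - s + r + 1 ≤ i then liftFin n k i + 1
                else liftFin n k i) *
            ∏ i : Fin n,
              (MvPolynomial.X i : MvPolynomial (Fin n) (Polynomial ℤ)) ^
                (k i + if (i : ℕ) + 1 ≤ r then 1 else 0) := by
  have hpos' : ∀ i, n - s + 1 ≤ i → i ≤ n → 1 ≤ lam i := fun i h1 h2 =>
    hpos.trans (hanti _ _ (by omega) h1 h2)
  have hit := iter_piComp n lam r (by omega)
  have H : Hyp n lam s nu r mu :=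
    { mono := hanti
      s1 := hs1
      sn := hsn
      rs := hrs
      rn := by omega
      zero := hzero
      pos := hpos'
      nu0 := fun i hi => by rw [hnu]; exact if_neg (by omega)
      nu1 := fun i hi => by rw [hnu]; exact if_pos hi
      mu1 := fun i h1 h2 => by rw [hmu, hit i h1 (by omega), if_pos h2]
      mu2 := fun i h1 h2 => by rw [hmu, hit i (by omega) h2, if_neg (by omega)] }
  clear hmu hnu hit
  have hRHS : (∑ k ∈ Fintype.piFinset fun _ : Fin n => Finset.range ((dgF n nu).card + 1),
          MvPolynomial.C
            (cCoef n nu (fun j => if j ≤ n - r then j + r else j - (n - r))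
              fun i => if i ≤ r ∨ n - s + r + 1 ≤ i then liftFin n k i + 1
                else liftFin n k i) *
            ∏ i : Fin n,
              (MvPolynomial.X i : MvPolynomial (Fin n) (Polynomial ℤ)) ^
                (k i + if (i : ℕ) + 1 ≤ r then 1 else 0)) =
      ∑ g ∈ (Fintype.piFinset fun _ : {u // u ∈ dgF n nu} => Finset.Icc 1 n).filter
        fun g => DCond n nu (aRow n r) (ext n nu g),
        MvPolynomial.C (Polynomial.X ^ ascStat n nu (ext n nu g)) *
          ∏ i : Fin n, (MvPolynomial.X i : MvPolynomial (Fin n) (Polynomial ℤ)) ^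
            (cont n nu (ext n nu g) ((i : ℕ) + 1) -
              if n - s + r + 1 ≤ (i : ℕ) + 1 then 1 else 0) := by
    change (∑ k ∈ Fintype.piFinset fun _ : Fin n => Finset.range ((dgF n nu).card + 1),
          MvPolynomial.C (cCoef n nu (aRow n r) _) * _) = _
    simp_rw [cCoef_eq, map_sum, sum_mul]
    rw [sum_comm]
    refine sum_congr rfl fun g hg => ?_
    exact H.sum_k (mem_filter.1 hg).2 _
  rw [hRHS]
  clear hRHS
  have hlink : ∀ f : {u // u ∈ dgF n mu} → ℕ, ∀ u ∈ dgF n nu,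
      ext n nu (fun w => aug (ext n mu f) (phi n r w.1)) u = aug (ext n mu f) (phi n r u) :=
    fun f u hu => ext_mem _ hu
  have hlink2 : ∀ g : {u // u ∈ dgF n nu} → ℕ, ∀ u ∈ dgF n mu,
      ext n mu (fun w => ext n nu g (psi n r w.1)) u = ext n nu g (psi n r u) :=
    fun f u hu => ext_mem _ hu
  refine sum_bij' (fun f _ w => aug (ext n mu f) (phi n r w.1))
    (fun g _ w => ext n nu g (psi n r w.1)) ?_ ?_ ?_ ?_ ?_
  · intro f hf
    have hD := H.fwd (mem_filter.1 hf).2 (hlink f)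
    rw [mem_filter, Fintype.mem_piFinset]
    refine ⟨?_, hD⟩
    rintro ⟨u, hu⟩
    have := hD.1 u hu
    rw [hlink f u hu] at this
    exact mem_Icc.2 this
  · intro g hg
    have hD := (H.bwd (mem_filter.1 hg).2 (hlink2 g)).1
    rw [mem_filter, Fintype.mem_piFinset]
    refine ⟨?_, hD⟩
    rintro ⟨u, hu⟩
    have := hD.1 u hu
    rw [hlink2 g u hu] at this
    exact mem_Icc.2 this
  · intro f hf
    funext ⟨u, hu⟩
    have hu1 := (mem_dgF.1 hu).2.2.1
    have pu := H.psi_mem (mem_union_left _ hu) (Or.inl hu1)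
    change ext n nu (fun w => aug (ext n mu f) (phi n r w.1)) (psi n r u) = f ⟨u, hu⟩
    rw [hlink f _ pu.1, pu.2.1, aug_of_pos hu1, ext_mem]
  · intro g hg
    funext ⟨u, hu⟩
    have := (H.bwd (mem_filter.1 hg).2 (hlink2 g)).2 u hu
    change aug (ext n mu (fun w => ext n nu g (psi n r w.1))) (phi n r u) = g ⟨u, hu⟩
    rw [← this, ext_mem]
  · intro f hf
    rw [H.stat (mem_filter.1 hf).2 (hlink f)]
    congr 1
    refine prod_congr rfl fun i _ => ?_
    congr 1
    have := H.content (hlink f) ((i : ℕ) + 1) (by have := i.2; omega)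
    unfold cont
    rw [this]
    omega
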